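/- Let q be a prime power with q ≡ 1 (mod 4) and let n be the integer with n - 1 = (q-1)/2. If q > 2809, then not every element of F_q can be written as the sum of a 5-potent element and an n-potent element, i.e., C_5 + C_n ≠ F_q. -/

import Mathlib

open Polynomial

/-- The coefficient of `T ^ k` in `P` has degree at most `c + w * k`. -/
def CoeffNatDegreeLE {R : Type*} [CommRing R] (c w : ℕ) (P : R[X][X]) : Prop :=
  ∀ k, (P.coeff k).natDegree ≤ c + w * k

namespace CoeffNatDegreeLE

variable {R : Type*} [CommRing R] {c c' w : ℕ} {P Q : R[X][X]}

theorem mono (hP : CoeffNatDegreeLE c w P) (h : c ≤ c') : CoeffNatDegreeLE c' w P :=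
  fun k => (hP k).trans (by gcongr)

theorem add (hP : CoeffNatDegreeLE c w P) (hQ : CoeffNatDegreeLE c w Q) :
    CoeffNatDegreeLE c w (P + Q) := fun k => by
  rw [coeff_add]
  exact natDegree_add_le_of_degree_le (hP k) (hQ k)

theorem sum {ι : Type*} {s : Finset ι} {P : ι → R[X][X]}
    (h : ∀ i ∈ s, CoeffNatDegreeLE c w (P i)) : CoeffNatDegreeLE c w (∑ i ∈ s, P i) := fun k => by
  rw [finsetSum_coeff]
  exact natDegree_sum_le_of_forall_le _ _ fun i hi => h i hi k

theorem mul (hP : CoeffNatDegreeLE c w P) (hQ : CoeffNatDegreeLE c' w Q) :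
    CoeffNatDegreeLE (c + c') w (P * Q) := fun k => by
  rw [coeff_mul]
  refine natDegree_sum_le_of_forall_le _ _ fun x hx => ?_
  rw [← Finset.HasAntidiagonal.mem_antidiagonal.mp hx]
  refine natDegree_mul_le.trans ((add_le_add (hP _) (hQ _)).trans (le_of_eq ?_))
  ring

theorem monomial {p : R[X]} {k : ℕ} (h : p.natDegree ≤ c + w * k) :
    CoeffNatDegreeLE c w (C p * X ^ k) := fun j => by
  rw [coeff_C_mul_X_pow]
  split_ifs with hj
  · rwa [hj]
  · simp

theorem const {p : R[X]} (h : p.natDegree ≤ c) : CoeffNatDegreeLE c w (C p) := by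
  simpa using monomial (p := p) (c := c) (w := w) (k := 0) (by simpa using h)

theorem pow (hP : CoeffNatDegreeLE c w P) (n : ℕ) : CoeffNatDegreeLE (n * c) w (P ^ n) := by
  induction n with
  | zero => simpa using const (w := w) (p := (1 : R[X])) (c := 0) (by simp)
  | succ n ih =>
    rw [pow_succ, add_mul, one_mul]
    exact ih.mul hP

end CoeffNatDegreeLE

section Stepanov

variable {F : Type*} [Field F]

/-- The polynomial `E` in `T` with `f * E(T) = f(X + f * T)`. -/
noncomputable def taylorQuotient (f : F[X]) : F[X][X] :=
  1 + ∑ k ∈ Finset.range f.natDegree, C (hasseDeriv (k + 1) f * f ^ k) * X ^ (k + 1)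

theorem coeffNatDegreeLE_taylorQuotient (f : F[X]) :
    CoeffNatDegreeLE 0 (f.natDegree - 1) (taylorQuotient f) := by
  refine .add ?_ (.sum fun k hk => .monomial ?_)
  · simpa using CoeffNatDegreeLE.const (c := 0) (w := f.natDegree - 1) (p := (1 : F[X])) (by simp)
  · refine natDegree_mul_le.trans
      ((add_le_add (natDegree_hasseDeriv_le f _) natDegree_pow_le).trans ?_)
    obtain ⟨m, hm⟩ : ∃ m, f.natDegree = k + 1 + m :=
      Nat.exists_eq_add_of_le (Finset.mem_range.mp hk)
    rw [hm, show k + 1 + m - (k + 1) = m by omega, show k + 1 + m - 1 = k + m by omega]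
    nlinarith

/-- The polynomial with coefficient `a (j, d)` at `X ^ (q * j + d)`. -/
noncomputable def blockPolynomial (q : ℕ) {J D : ℕ} (a : Fin J × Fin D → F) : F[X] :=
  ∑ p, C (a p) * X ^ (q * p.1 + p.2 : ℕ)

theorem coeff_blockPolynomial {q J D : ℕ} (hD : D ≤ q) (a : Fin J × Fin D → F)
    (p : Fin J × Fin D) : (blockPolynomial q a).coeff (q * p.1 + p.2) = a p := by
  rw [blockPolynomial, finsetSum_coeff, Finset.sum_eq_single p]
  · simp
  · intro r _ hr
    rw [coeff_C_mul_X_pow, if_neg]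
    intro h
    have hp : (p.2 : ℕ) < q := p.2.2.trans_le hD
    have hr' : (r.2 : ℕ) < q := r.2.2.trans_le hD
    have hq : 0 < q := by omega
    have h1 := congrArg (· / q) h
    have h2 := congrArg (· % q) h
    simp only [Nat.mul_add_div hq, Nat.div_eq_of_lt hp, Nat.div_eq_of_lt hr', Nat.mul_add_mod,
      Nat.mod_eq_of_lt hp, Nat.mod_eq_of_lt hr', add_zero] at h1 h2
    exact hr (Prod.ext (Fin.ext h1.symm) (Fin.ext h2.symm))
  · simp

theorem exists_natDegree_blockPolynomial {q J D : ℕ} {a : Fin J × Fin D → F}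
    (h : blockPolynomial q a ≠ 0) :
    ∃ p : Fin J × Fin D, (blockPolynomial q a).natDegree = q * p.1 + p.2 := by
  by_contra! hne
  refine leadingCoeff_ne_zero.mpr h ?_
  rw [leadingCoeff]
  generalize (blockPolynomial q a).natDegree = n at hne
  rw [blockPolynomial, finsetSum_coeff]
  refine Finset.sum_eq_zero fun p _ => ?_
  rw [coeff_C_mul_X_pow, if_neg (hne p)]

theorem blockPolynomial_add_mul_ne_zero {q J D e m : ℕ} {f : F[X]} (hm : f.natDegree = m)
    (hodd : Odd m) (he : q = 2 * e + 1) (hD : 2 * D + m ≤ q) {a b : Fin J × Fin D → F}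
    (h : a ≠ 0 ∨ b ≠ 0) : blockPolynomial q a + blockPolynomial q b * f ^ e ≠ 0 := by
  have hne {a : Fin J × Fin D → F} (ha : a ≠ 0) : blockPolynomial q a ≠ 0 := by
    contrapose! ha
    ext p
    rw [← coeff_blockPolynomial (by omega : D ≤ q) a p, ha]
    simp
  have hf : f ≠ 0 := by
    rintro rfl
    rw [← hm] at hodd
    simp at hodd
  intro h0
  have h0' : blockPolynomial q a = -(blockPolynomial q b * f ^ e) := eq_neg_of_add_eq_zero_left h0
  rcases eq_or_ne b 0 with rfl | hb
  · refine hne (h.resolve_right (by simp)) ?_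
    simpa [blockPolynomial] using h0
  have hB := hne hb
  have hA : blockPolynomial q a ≠ 0 := by
    rw [h0']
    exact neg_ne_zero.mpr (mul_ne_zero hB (pow_ne_zero _ hf))
  obtain ⟨p, hp⟩ := exists_natDegree_blockPolynomial hA
  obtain ⟨r, hr⟩ := exists_natDegree_blockPolynomial hB
  have hdeg := congrArg natDegree h0'
  rw [natDegree_neg, natDegree_mul hB (pow_ne_zero _ hf), natDegree_pow, hp, hr, hm] at hdeg
  have hp2 := p.2.2
  have hr2 := r.2.2
  have hz : (q : ℤ) * (2 * p.1 - 2 * r.1 - m) = 2 * r.2 - 2 * p.2 - m := by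
    zify at hdeg he
    linear_combination 2 * hdeg + (m : ℤ) * (-he)
  have := Int.eq_zero_of_abs_lt_dvd (Dvd.intro _ hz) (by rw [abs_lt]; constructor <;> omega)
  obtain ⟨n, hn⟩ := hodd
  omega

theorem natDegree_blockPolynomial_le {q J D : ℕ} (a : Fin J × Fin D → F) :
    (blockPolynomial q a).natDegree ≤ q * (J - 1) + D := by
  refine natDegree_sum_le_of_forall_le _ _ fun p _ => (natDegree_C_mul_X_pow_le _ _).trans ?_
  have h1 := p.1.2
  have h2 := p.2.2
  gcongr
  omega

variable [Fintype F]

theorem pow_card_eq_add_sum_hasseDeriv (f : F[X]) :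
    f ^ Fintype.card F = f + ∑ k ∈ Finset.range f.natDegree,
      hasseDeriv (k + 1) f * (X ^ Fintype.card F - X) ^ (k + 1) := by
  have hmap (k : ℕ) : hasseDeriv k (f.map C) = (hasseDeriv k f).map C := by
    ext1 n
    simp [hasseDeriv_coeff]
  have key : (taylor X (f.map C)).eval (X ^ Fintype.card F - X) = f ^ Fintype.card F := by
    rw [taylor_eval, sub_add_cancel, eval_map, eval₂_eq_sum, ← FiniteField.expand_card f,
      expand_eq_sum]
  rw [← key, eval_eq_sum_range, natDegree_taylor, natDegree_map_eq_of_injective C_injective,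
    Finset.sum_range_succ']
  simp only [taylor_coeff, hmap, eval_map, eval₂_C_X, pow_zero, mul_one, hasseDeriv_zero']
  ring

/-- Modulo a high power of `X - α`, with `f(α)` a nonzero square, `f ^ ((q - 1) / 2)` is the value
at `(X ^ q - X) / f` of a square root of `taylorQuotient f`. -/
theorem eval_taylorQuotient_pow {Q : Type*} [CommRing Q] (φ : F[X] →+* Q) {f : F[X]} {e : ℕ}
    (he : Fintype.card F = 2 * e + 1) {v : Q} (hv : φ f * v = 1)
    (hg : (φ f ^ e) ^ Fintype.card F = 1) :
    (taylorQuotient f ^ (e + 1)).eval₂ φ (φ (X ^ Fintype.card F - X) * v) = φ f ^ e := by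
  set τ := φ (X ^ Fintype.card F - X) * v with hτ
  have hfτ : φ f * τ = φ (X ^ Fintype.card F - X) := by
    rw [hτ]; linear_combination φ (X ^ Fintype.card F - X) * hv
  have h1 : φ f * (taylorQuotient f).eval₂ φ τ = φ f ^ Fintype.card F := by
    rw [← map_pow, pow_card_eq_add_sum_hasseDeriv, taylorQuotient]
    simp only [eval₂_add, eval₂_one, eval₂_finsetSum, eval₂_mul, eval₂_C, eval₂_pow, eval₂_X,
      mul_add, mul_one, map_add, map_sum, map_mul, map_pow, Finset.mul_sum]
    congr 1
    refine Finset.sum_congr rfl fun k _ => ?_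
    rw [← hfτ]
    ring
  have h2 : (taylorQuotient f).eval₂ φ τ = (φ f ^ e) ^ 2 := by
    have : (taylorQuotient f).eval₂ φ τ = v * φ f ^ Fintype.card F := by
      linear_combination v * h1 - (taylorQuotient f).eval₂ φ τ * hv
    rw [this, he]
    linear_combination φ f ^ (2 * e) * hv
  rw [eval₂_pow, h2]
  calc ((φ f ^ e) ^ 2) ^ (e + 1) = φ f ^ e * (φ f ^ e) ^ (2 * e + 1) := by ring
    _ = φ f ^ e := by rw [← he, hg, mul_one]


open CoeffNatDegreeLE in
theorem exists_blockPolynomial {J D l m e : ℕ} {f : F[X]} (hm : f.natDegree = m)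
    (hcount : l * (D + J + (m - 1) * l) < 2 * J * D) (he : Fintype.card F = 2 * e + 1) :
    ∃ a b : Fin J × Fin D → F, (a ≠ 0 ∨ b ≠ 0) ∧
      ∀ α : F, f.eval α ≠ 0 → f.eval α ^ e = 1 → l ≤ Fintype.card F →
        (X - C α) ^ l ∣ blockPolynomial (Fintype.card F) a +
          blockPolynomial (Fintype.card F) b * f ^ e := by
  set q := Fintype.card F
  let v (p : Fin J × Fin D) : F[X][X] :=
    C (X ^ (p.2 : ℕ)) * (C X + C f * X ^ 1) ^ (p.1 : ℕ)
  let w : (Fin J × Fin D) ⊕ (Fin J × Fin D) → F[X][X] :=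
    Sum.elim v fun p => v p * taylorQuotient f ^ (e + 1)
  let M := D + J + (m - 1) * l
  let L : ((Fin J × Fin D) ⊕ (Fin J × Fin D) → F) →ₗ[F] (Fin l × Fin M → F) :=
    Matrix.mulVecLin (Matrix.of fun (k : Fin l × Fin M) i => ((w i).coeff k.1).coeff k.2)
  have hL : L.ker ≠ ⊥ := by
    apply LinearMap.ker_ne_bot_of_finrank_lt
    simp only [Module.finrank_fintype_fun_eq_card, Fintype.card_sum, Fintype.card_prod,
      Fintype.card_fin]
    have hcount' : l * M < 2 * J * D := hcount
    linarith
  obtain ⟨c, hc, hc0⟩ := (Submodule.ne_bot_iff _).mp hL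
  have hv (p) : CoeffNatDegreeLE (D - 1 + (J - 1)) (m - 1) (v p) := by
    have h1 := p.1.2
    have h2 := p.2.2
    have h3 : CoeffNatDegreeLE 1 (m - 1) (C X + C f * X ^ 1) :=
      (const natDegree_X_le).add (monomial (by omega))
    have h4 : CoeffNatDegreeLE (p.2 : ℕ) (m - 1) (C (X ^ (p.2 : ℕ)) : F[X][X]) :=
      const (natDegree_X_pow_le _)
    exact (h4.mul (h3.pow p.1)).mono (by omega)
  have hw (i) : CoeffNatDegreeLE (D - 1 + (J - 1)) (m - 1) (w i) := by
    rcases i with p | p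
    · exact hv p
    · have h := (coeffNatDegreeLE_taylorQuotient f).pow (e + 1)
      rw [hm] at h
      exact ((hv p).mul h).mono (by omega)
  let P : F[X][X] := ∑ i, C (C (c i)) * w i
  have hP : X ^ l ∣ P := by
    rw [X_pow_dvd_iff]
    intro k hk
    ext n
    rw [coeff_zero, finsetSum_coeff, finsetSum_coeff]
    simp only [coeff_C_mul]
    by_cases hn : n < M
    · have := congrFun (LinearMap.mem_ker.mp hc) (⟨k, hk⟩, ⟨n, hn⟩)
      simpa [L, Matrix.mulVec, dotProduct, mul_comm] using this
    · refine Finset.sum_eq_zero fun i _ => ?_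
      rw [coeff_eq_zero_of_natDegree_lt, mul_zero]
      refine (hw i k).trans_lt ?_
      have : (m - 1) * k ≤ (m - 1) * l := by gcongr
      have h1 : 0 < J ∧ 0 < D := by
        rcases i with p | p <;> exact ⟨p.1.pos, p.2.pos⟩
      simp only [M] at hn
      omega
  refine ⟨fun p => c (.inl p), fun p => c (.inr p), ?_, fun α hα0 hα1 hl => ?_⟩
  · by_contra! h
    refine hc0 (funext ?_)
    rintro (p | p)
    · exact congrFun h.1 p
    · exact congrFun h.2 p
  let φ := Ideal.Quotient.mk (Ideal.span {(X - C α) ^ l})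
  have hφ {p : F[X]} (h : (X - C α) ^ l ∣ p) : φ p = 0 :=
    Ideal.Quotient.eq_zero_iff_mem.mpr (Ideal.mem_span_singleton.mpr h)
  have hcop : IsCoprime f ((X - C α) ^ l) := by
    refine IsCoprime.pow_right (IsCoprime.symm ?_)
    rw [(irreducible_X_sub_C α).coprime_iff_not_dvd, dvd_iff_isRoot]
    exact hα0
  obtain ⟨r, s, hrs⟩ := hcop
  have hr : φ f * φ r = 1 := by
    have := congrArg φ hrs
    rw [map_add, map_mul, map_mul, hφ dvd_rfl, mul_zero, add_zero, map_one] at this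
    rw [mul_comm, this]
  have hg : (φ f ^ e) ^ q = 1 := by
    rw [← sub_eq_zero, ← map_pow, ← map_pow, ← map_one φ, ← map_sub]
    apply hφ
    refine (pow_dvd_pow _ hl).trans ?_
    obtain ⟨p, hp⟩ := CharP.exists F
    obtain ⟨n, hp', hn⟩ := FiniteField.card F p
    have := Fact.mk hp'
    have h1 : (f ^ e) ^ q - 1 = (f ^ e - 1) ^ q := by
      simp only [q, hn]
      rw [sub_pow_expChar_pow (p := p), one_pow]
    rw [h1]
    apply pow_dvd_pow_of_dvd
    rw [dvd_iff_isRoot]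
    simp [hα1]
  have hu : (X - C α) ∣ (X ^ q - X : F[X]) := by
    rw [dvd_iff_isRoot]
    simp [q, FiniteField.pow_card]
  let τ := φ (X ^ q - X) * φ r
  have hfτ : φ f * τ = φ (X ^ q - X) := by
    simp only [τ]; linear_combination φ (X ^ q - X) * hr
  have hS : (taylorQuotient f ^ (e + 1)).eval₂ φ τ = φ f ^ e := eval_taylorQuotient_pow φ he hr hg
  have hvτ (p) : (v p).eval₂ φ τ = φ (X ^ (q * p.1 + p.2 : ℕ)) := by
    simp only [v, eval₂_mul, eval₂_C, eval₂_pow, eval₂_add, eval₂_X, pow_one]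
    rw [hfτ, ← map_add, add_sub_cancel, ← map_pow, ← map_mul, ← pow_mul, ← pow_add, add_comm]
  have hPτ : P.eval₂ φ τ = φ (blockPolynomial q (fun p => c (.inl p)) +
      blockPolynomial q (fun p => c (.inr p)) * f ^ e) := by
    simp only [P, blockPolynomial, eval₂_finsetSum, Fintype.sum_sum_type, w, Sum.elim_inl,
      Sum.elim_inr, eval₂_add, eval₂_mul, eval₂_C, hvτ, hS, map_add, map_mul, map_sum, Finset.sum_mul,
      map_pow φ f, mul_assoc]
  have h0 : P.eval₂ φ τ = 0 := by
    obtain ⟨P', hP'⟩ := hP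
    rw [hP', eval₂_mul, eval₂_pow, eval₂_X]
    simp only [τ]
    rw [mul_pow, ← map_pow, hφ (pow_dvd_pow_of_dvd hu l), zero_mul, zero_mul]
  rw [hPτ] at h0
  exact Ideal.mem_span_singleton.mp (Ideal.Quotient.eq_zero_iff_mem.mp h0)

/-- **Stepanov's bound** on the number of points where a polynomial of odd degree takes a nonzero
square value. -/
theorem mul_card_filter_pow_eq_one_le [DecidableEq F] {J D l m e : ℕ} {f : F[X]}
    (hm : f.natDegree = m) (hodd : Odd m) (hcount : l * (D + J + (m - 1) * l) < 2 * J * D)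
    (he : Fintype.card F = 2 * e + 1) (hD : 2 * D + m ≤ Fintype.card F)
    (hl : l ≤ Fintype.card F) :
    l * (Finset.univ.filter fun α : F => f.eval α ≠ 0 ∧ f.eval α ^ e = 1).card ≤
      Fintype.card F * (J - 1) + D + m * e := by
  obtain ⟨a, b, hab, h⟩ := exists_blockPolynomial hm hcount he
  have hdvd : ∏ α ∈ Finset.univ.filter (fun α : F => f.eval α ≠ 0 ∧ f.eval α ^ e = 1),
      (X - C α) ^ l ∣ blockPolynomial (Fintype.card F) a +
        blockPolynomial (Fintype.card F) b * f ^ e := by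
    apply Finset.prod_dvd_of_coprime
    · intro x _ y _ hxy
      exact (pairwise_coprime_X_sub_C Function.injective_id hxy).pow
    · intro α hα
      obtain ⟨-, h0, h1⟩ := Finset.mem_filter.mp hα
      exact h α h0 h1 hl
  have hle := natDegree_le_of_dvd hdvd (blockPolynomial_add_mul_ne_zero hm hodd he hD hab)
  rw [natDegree_prod _ _ fun α _ => pow_ne_zero _ (X_sub_C_ne_zero α)] at hle
  simp only [natDegree_pow, natDegree_X_sub_C, mul_one, Finset.sum_const, smul_eq_mul] at hle
  rw [mul_comm]
  refine hle.trans (natDegree_add_le_of_degree_le ?_ ?_)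
  · exact (natDegree_blockPolynomial_le a).trans (Nat.le_add_right _ _)
  · refine natDegree_mul_le.trans (add_le_add (natDegree_blockPolynomial_le b) ?_)
    rw [natDegree_pow, hm, mul_comm]

end Stepanov

section QuadraticCharSums

variable {F : Type*} [Field F] [Fintype F] [DecidableEq F]

theorem mul_sum_quadraticChar_le (hF : ringChar F ≠ 2) {J D l m e : ℕ} {f : F[X]}
    (hm : f.natDegree = m) (hodd : Odd m) (hcount : l * (D + J + (m - 1) * l) < 2 * J * D)
    (he : Fintype.card F = 2 * e + 1) (hD : 2 * D + m ≤ Fintype.card F)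
    (hl : l ≤ Fintype.card F) :
    l * ∑ x, quadraticChar F (f.eval x) ≤
      2 * ((Fintype.card F * (J - 1 : ℕ) + D + m * e : ℕ) : ℤ) - l * Fintype.card F + l * m := by
  have hS := mul_card_filter_pow_eq_one_le hm hodd hcount he hD hl
  set N := (Finset.univ.filter fun α : F => f.eval α ≠ 0 ∧ f.eval α ^ e = 1).card with hN
  have hf : f ≠ 0 := by
    rintro rfl
    rw [← hm] at hodd
    simp at hodd
  have hroots : (Finset.univ.filter fun α : F => f.eval α = 0).card ≤ m := by
    have : Finset.univ.filter (fun α : F => f.eval α = 0) ⊆ f.roots.toFinset := fun α hα => by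
      simpa [hf] using hα
    exact (Finset.card_le_card this).trans ((Multiset.toFinset_card_le _).trans
      (hm ▸ card_roots' f))
  have hpt (x : F) : quadraticChar F (f.eval x) ≤
      2 * (if f.eval x ≠ 0 ∧ f.eval x ^ e = 1 then 1 else 0) - 1 +
        (if f.eval x = 0 then 1 else 0) := by
    rcases eq_or_ne (f.eval x) 0 with h0 | h0
    · simp [h0]
    · rw [quadraticChar_eq_pow_of_char_ne_two hF h0, show Fintype.card F / 2 = e by omega]
      split_ifs <;> simp_all
  have hsum : ∑ x, quadraticChar F (f.eval x) ≤ 2 * N - Fintype.card F + m := by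
    refine (Finset.sum_le_sum fun x _ => hpt x).trans ?_
    rw [Finset.sum_add_distrib, Finset.sum_sub_distrib, ← Finset.mul_sum, Finset.sum_boole,
      Finset.sum_boole, ← hN]
    simp only [Finset.sum_const, Finset.card_univ, nsmul_eq_mul, mul_one]
    have : ((Finset.univ.filter fun α : F => f.eval α = 0).card : ℤ) ≤ m := by exact_mod_cast hroots
    linarith
  have h1 := mul_le_mul_of_nonneg_left hsum (Nat.cast_nonneg (α := ℤ) l)
  have h2 : (l : ℤ) * N ≤ (Fintype.card F * (J - 1 : ℕ) + D + m * e : ℕ) := by exact_mod_cast hS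
  linarith

theorem mul_abs_sum_quadraticChar_le (hF : ringChar F ≠ 2) {J D l m e : ℕ} {f : F[X]}
    (hm : f.natDegree = m) (hodd : Odd m) (hcount : l * (D + J + (m - 1) * l) < 2 * J * D)
    (he : Fintype.card F = 2 * e + 1) (hD : 2 * D + m ≤ Fintype.card F)
    (hl : l ≤ Fintype.card F) :
    l * |∑ x, quadraticChar F (f.eval x)| ≤
      2 * ((Fintype.card F * (J - 1 : ℕ) + D + m * e : ℕ) : ℤ) - l * Fintype.card F + l * m := by
  have h1 := mul_sum_quadraticChar_le hF hm hodd hcount he hD hl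
  obtain ⟨c, hc⟩ := quadraticChar_exists_neg_one hF
  have hc0 : c ≠ 0 := by
    rintro rfl
    simp at hc
  have h2 := mul_sum_quadraticChar_le hF ((natDegree_C_mul hc0).trans hm) hodd hcount he hD hl
  simp only [eval_mul, eval_C, map_mul, hc, neg_one_mul, Finset.sum_neg_distrib] at h2
  rcases abs_cases (∑ x, quadraticChar F (f.eval x)) with ⟨h, -⟩ | ⟨h, -⟩ <;> rw [h] <;> assumption

theorem sum_quadraticChar_sub (hF : ringChar F ≠ 2) (r : F) :
    ∑ x, quadraticChar F (x - r) = 0 := by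
  rw [← quadraticChar_sum_zero hF]
  exact (Equiv.subRight r).sum_comp fun x => quadraticChar F x

theorem sum_quadraticChar_sub_mul_sub (hF : ringChar F ≠ 2) {r s : F} (h : r ≠ s) :
    ∑ x, quadraticChar F (x - r) * quadraticChar F (x - s) = -1 := by
  have hsr : s - r ≠ 0 := sub_ne_zero.mpr h.symm
  have hJ := jacobiSum_nontrivial_inv (quadraticChar_ne_one hF)
  rw [(quadraticChar_isQuadratic F).inv, jacobiSum] at hJ
  have h1 : quadraticChar F (-1) ^ 2 = 1 := quadraticChar_sq_one (neg_ne_zero.mpr one_ne_zero)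
  have h2 : quadraticChar F (s - r) ^ 2 = 1 := quadraticChar_sq_one hsr
  rw [← ((Equiv.mulLeft₀ _ hsr).trans (Equiv.addRight r)).sum_comp]
  calc _ = ∑ t : F, quadraticChar F (-1) * (quadraticChar F t * quadraticChar F (1 - t)) := by
        refine Finset.sum_congr rfl fun t _ => ?_
        simp only [Equiv.trans_apply, Equiv.mulLeft₀_apply, Equiv.coe_addRight, add_sub_cancel_right]
        rw [show (s - r) * t + r - s = (s - r) * (-1 * (1 - t)) by ring, map_mul, map_mul, map_mul]
        linear_combination
          quadraticChar F t * quadraticChar F (-1) * quadraticChar F (1 - t) * h2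
    _ = -1 := by rw [← Finset.mul_sum, hJ]; linear_combination -h1

theorem sum_comp_sq (hF : ringChar F ≠ 2) (g : F → ℤ) :
    ∑ x, g (x ^ 2) = ∑ y, (quadraticChar F y + 1) * g y := by
  rw [← Finset.sum_fiberwise Finset.univ (fun x : F => x ^ 2)]
  refine Finset.sum_congr rfl fun y _ => ?_
  rw [Finset.sum_congr rfl fun x hx => congrArg g (Finset.mem_filter.mp hx).2, Finset.sum_const,
    nsmul_eq_mul, ← quadraticChar_card_sqrts hF]
  congr 3
  ext x
  simp

theorem prod_one_sub_le {a b c d e : ℤ} (ha : |a| ≤ 1) (hb : |b| ≤ 1) (hc : |c| ≤ 1)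
    (hd : |d| ≤ 1) (he : |e| ≤ 1) : (1 - a) * (1 - b) * (1 - c) * (1 - d) * (1 - e) ≤ 32 := by
  rw [abs_le] at *
  calc _ ≤ (2 * 2 * 2 * 2 * 2 : ℤ) := by gcongr <;> linarith
    _ = 32 := by norm_num

theorem abs_quadraticChar_le_one (x : F) : |quadraticChar F x| ≤ 1 := by
  rcases quadraticChar_isQuadratic F x with h | h | h <;> simp [h]

end QuadraticCharSums

section FivePotents

variable {F : Type*} [Field F] [Fintype F] [DecidableEq F]

theorem abs_sum_quadraticChar_cubic_le (hF : ringChar F ≠ 2) (hq : 2809 < Fintype.card F)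
    (r s t : F) :
    30 * |∑ x, quadraticChar F (x - r) * quadraticChar F (x - s) * quadraticChar F (x - t)| ≤
      3 * Fintype.card F + 2369 := by
  have hodd : Fintype.card F % 2 = 1 := FiniteField.odd_card_of_char_ne_two hF
  have hdeg : ((X - C r) * (X - C s) * (X - C t)).natDegree = 3 := by
    rw [natDegree_mul (mul_ne_zero (X_sub_C_ne_zero r) (X_sub_C_ne_zero s)) (X_sub_C_ne_zero t),
      natDegree_mul (X_sub_C_ne_zero r) (X_sub_C_ne_zero s)]
    simp
  have := mul_abs_sum_quadraticChar_le hF hdeg (by decide) (l := 30) (J := 16) (D := 1141)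
    (e := Fintype.card F / 2) (by norm_num) (by omega) (by omega) (by omega)
  simp only [eval_mul, eval_sub, eval_X, eval_C, map_mul] at this
  refine this.trans ?_
  push_cast
  omega

theorem abs_sum_quadraticChar_quintic_le (hF : ringChar F ≠ 2) (hq : 2809 < Fintype.card F)
    (r s t u v : F) :
    24 * |∑ x, quadraticChar F (x - r) * quadraticChar F (x - s) * quadraticChar F (x - t) *
      quadraticChar F (x - u) * quadraticChar F (x - v)| ≤ 5 * Fintype.card F + 2733 := by
  have hodd : Fintype.card F % 2 = 1 := FiniteField.odd_card_of_char_ne_two hF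
  have hdeg : ((X - C r) * (X - C s) * (X - C t) * (X - C u) * (X - C v)).natDegree = 5 := by
    have h2 := mul_ne_zero (X_sub_C_ne_zero r) (X_sub_C_ne_zero s)
    have h3 := mul_ne_zero h2 (X_sub_C_ne_zero t)
    have h4 := mul_ne_zero h3 (X_sub_C_ne_zero u)
    rw [natDegree_mul h4 (X_sub_C_ne_zero v), natDegree_mul h3 (X_sub_C_ne_zero u),
      natDegree_mul h2 (X_sub_C_ne_zero t),
      natDegree_mul (X_sub_C_ne_zero r) (X_sub_C_ne_zero s)]
    simp
  have := mul_abs_sum_quadraticChar_le hF hdeg (by decide) (l := 24) (J := 13) (D := 1309)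
    (e := Fintype.card F / 2) (by norm_num) (by omega) (by omega) (by omega)
  simp only [eval_mul, eval_sub, eval_X, eval_C, map_mul] at this
  refine this.trans ?_
  push_cast
  omega

theorem sum_quadraticChar_pow_four_sub_one (hF : ringChar F ≠ 2) {i : F} (hi : i * i = -1) :
    ∑ x, quadraticChar F (x - 1) * quadraticChar F (x + 1) * quadraticChar F (x - i) *
        quadraticChar F (x + i) =
      ∑ x, quadraticChar F x * quadraticChar F (x - 1) * quadraticChar F (x + 1) - 1 := by
  have h2 : (1 : F) ≠ -1 := (Ring.neg_one_ne_one_of_char_ne_two hF).symm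
  have hpair := sum_quadraticChar_sub_mul_sub hF h2
  simp only [sub_neg_eq_add] at hpair
  calc _ = ∑ x : F, quadraticChar F (x ^ 2 - 1) * quadraticChar F (x ^ 2 + 1) := by
        refine Finset.sum_congr rfl fun x _ => ?_
        rw [show x ^ 2 - 1 = (x - 1) * (x + 1) by ring,
          show x ^ 2 + 1 = (x - i) * (x + i) by linear_combination hi, map_mul, map_mul, mul_assoc]
    _ = _ := by
        rw [sum_comp_sq hF fun y => quadraticChar F (y - 1) * quadraticChar F (y + 1)]
        simp only [add_mul, one_mul, Finset.sum_add_distrib, hpair, ← mul_assoc]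
        ring

/-- The substitution `x ↦ x⁻¹` turns a quartic sum into a cubic one. -/
theorem sum_quadraticChar_inv (hneg : quadraticChar F (-1) = 1) {i : F} (hi : i * i = -1) :
    ∑ x, quadraticChar F x * quadraticChar F (x - 1) * quadraticChar F (x + 1) *
        quadraticChar F (x - i) =
      quadraticChar F i * ∑ x, quadraticChar F (x - 1) * quadraticChar F (x + 1) *
        quadraticChar F (x + i) - 1 := by
  have hi0 : i ≠ 0 := by
    rintro rfl
    simp at hi
  have hi2 : quadraticChar F i ^ 2 = 1 := quadraticChar_sq_one hi0
  have hpt (x : F) : quadraticChar F x⁻¹ * quadraticChar F (x⁻¹ - 1) * quadraticChar F (x⁻¹ + 1) *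
      quadraticChar F (x⁻¹ - i) = quadraticChar F i * (quadraticChar F (x - 1) *
        quadraticChar F (x + 1) * quadraticChar F (x + i)) - if x = 0 then 1 else 0 := by
    rcases eq_or_ne x 0 with rfl | hx
    · have h0 : quadraticChar F 0 = 0 := quadraticChar_zero
      simp only [inv_zero, h0, zero_mul, zero_sub, zero_add, hneg, map_one, if_true]
      linear_combination -hi2
    · have hx4 : quadraticChar F (x ^ 2) ^ 2 = 1 := quadraticChar_sq_one (pow_ne_zero 2 hx)
      rw [if_neg hx, sub_zero, ← map_mul, ← map_mul, ← map_mul]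
      calc _ = quadraticChar F (x ^ 2 * x ^ 2) *
            quadraticChar F (x⁻¹ * (x⁻¹ - 1) * (x⁻¹ + 1) * (x⁻¹ - i)) := by
            rw [map_mul (quadraticChar F) (x ^ 2) (x ^ 2), ← sq, hx4, one_mul]
        _ = quadraticChar F (i * ((x - 1) * (x + 1) * (x + i))) := by
            rw [← map_mul]
            congr 1
            field_simp
            linear_combination (1 - x ^ 2) * hi
        _ = _ := by simp only [map_mul]
  refine (Equiv.sum_comp (Equiv.inv F) _).symm.trans ?_
  simp only [Equiv.inv_apply, hpt, Finset.sum_sub_distrib, ← Finset.mul_sum]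
  simp

/-- The summand vanishes unless none of `x, x - 1, x + 1, x - i, x + i` is a nonzero square. -/
theorem lt_sum_prod_one_sub_quadraticChar (hF : ringChar F ≠ 2) (hq : 2809 < Fintype.card F)
    (hneg : quadraticChar F (-1) = 1) {i : F} (hi : i * i = -1) :
    160 < ∑ x, (1 - quadraticChar F x) * (1 - quadraticChar F (x - 1)) *
      (1 - quadraticChar F (x + 1)) * (1 - quadraticChar F (x - i)) *
      (1 - quadraticChar F (x + i)) := by
  have h11 : (1 : F) ≠ -1 := (Ring.neg_one_ne_one_of_char_ne_two hF).symm
  have hi0 : i ≠ 0 := by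
    rintro rfl
    simp at hi
  have hi1 : i ≠ 1 := by
    rintro rfl
    exact h11 (by rw [← hi, one_mul])
  have him1 : i ≠ -1 := by
    rintro rfl
    exact h11 (by rw [← hi]; ring)
  have hii : i ≠ -i := by
    intro h
    have : i * (1 - -1) = 0 := by linear_combination h
    exact (mul_ne_zero hi0 (sub_ne_zero.mpr h11)) this
  have hni1 : (1 : F) ≠ -i := fun h => him1 (by rw [h, neg_neg])
  have hnim1 : (-1 : F) ≠ -i := fun h => hi1 (neg_injective h).symm
  set c := quadraticChar F i with hc
  have hcc : c = 1 ∨ c = -1 := quadraticChar_dichotomy hi0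
  let a (x : F) : ℤ := quadraticChar F x
  let b (x : F) : ℤ := quadraticChar F (x - 1)
  let d (x : F) : ℤ := quadraticChar F (x + 1)
  let e (x : F) : ℤ := quadraticChar F (x - i)
  let h (x : F) : ℤ := quadraticChar F (x + i)
  have ra (x : F) : a (i * x) = c * a x := map_mul _ _ _
  have rb (x : F) : b (i * x) = c * h x := by
    simp only [b, h, hc, ← map_mul]; congr 1; linear_combination -hi
  have rd (x : F) : d (i * x) = c * e x := by
    simp only [d, e, hc, ← map_mul]; congr 1; linear_combination hi
  have re (x : F) : e (i * x) = c * b x := by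
    simp only [e, b, hc, ← map_mul]; congr 1; ring
  have rh (x : F) : h (i * x) = c * d x := by
    simp only [h, d, hc, ← map_mul]; congr 1; ring
  have rot (g : F → ℤ) : ∑ x, g x = ∑ x, g (i * x) :=
    (Equiv.sum_comp (Equiv.mulLeft₀ i hi0) g).symm
  have c2 : c ^ 2 = 1 := by rcases hcc with h | h <;> simp [h]
  have c3 : c ^ 3 = c := by rw [pow_succ, c2, one_mul]
  have c4 : c ^ 4 = 1 := by rw [pow_succ, c3, ← sq, c2]
  -- linear terms
  have sa : ∑ x, a x = 0 := quadraticChar_sum_zero hF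
  have sb : ∑ x, b x = 0 := sum_quadraticChar_sub hF 1
  have sd : ∑ x, d x = 0 := by simpa only [sub_neg_eq_add, sub_zero] using sum_quadraticChar_sub hF (-1 : F)
  have se : ∑ x, e x = 0 := sum_quadraticChar_sub hF i
  have sh : ∑ x, h x = 0 := by simpa only [sub_neg_eq_add, sub_zero] using sum_quadraticChar_sub hF (-i)
  -- quadratic terms
  have pair {r s : F} (hrs : r ≠ s) := sum_quadraticChar_sub_mul_sub hF hrs
  have sab : ∑ x, a x * b x = -1 := by simpa only [sub_neg_eq_add, sub_zero] using pair (zero_ne_one (α := F))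
  have sad : ∑ x, a x * d x = -1 := by simpa only [sub_neg_eq_add, sub_zero] using pair (neg_ne_zero.mpr (one_ne_zero (α := F))).symm
  have sae : ∑ x, a x * e x = -1 := by simpa only [sub_neg_eq_add, sub_zero] using pair hi0.symm
  have sah : ∑ x, a x * h x = -1 := by simpa only [sub_neg_eq_add, sub_zero] using pair (neg_ne_zero.mpr hi0).symm
  have sbd : ∑ x, b x * d x = -1 := by simpa only [sub_neg_eq_add, sub_zero] using pair h11
  have sbe : ∑ x, b x * e x = -1 := by simpa only [sub_neg_eq_add, sub_zero] using pair hi1.symm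
  have sbh : ∑ x, b x * h x = -1 := by simpa only [sub_neg_eq_add, sub_zero] using pair hni1
  have sde : ∑ x, d x * e x = -1 := by simpa only [sub_neg_eq_add, sub_zero] using pair him1.symm
  have sdh : ∑ x, d x * h x = -1 := by simpa only [sub_neg_eq_add, sub_zero] using pair hnim1
  have seh : ∑ x, e x * h x = -1 := by simpa only [sub_neg_eq_add, sub_zero] using pair hii
  -- cubic terms
  have rot3 {f g k f' g' k' : F → ℤ} {t : F → ℤ} (hf : ∀ x, f (i * x) = c * f' x)
      (hg : ∀ x, g (i * x) = c * g' x) (hk : ∀ x, k (i * x) = c * k' x)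
      (ht : ∀ x, f' x * g' x * k' x = t x) : ∑ x, f x * g x * k x = c * ∑ x, t x := by
    rw [rot, Finset.mul_sum]
    refine Finset.sum_congr rfl fun x _ => ?_
    rw [hf, hg, hk, ← ht]
    linear_combination f' x * g' x * k' x * c3
  have rot4 {f g k l f' g' k' l' : F → ℤ} {t : F → ℤ} (hf : ∀ x, f (i * x) = c * f' x)
      (hg : ∀ x, g (i * x) = c * g' x) (hk : ∀ x, k (i * x) = c * k' x)
      (hl : ∀ x, l (i * x) = c * l' x) (ht : ∀ x, f' x * g' x * k' x * l' x = t x) :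
      ∑ x, f x * g x * k x * l x = ∑ x, t x := by
    rw [rot]
    refine Finset.sum_congr rfl fun x _ => ?_
    rw [hf, hg, hk, hl, ← ht]
    linear_combination f' x * g' x * k' x * l' x * c4
  have c2' (S : ℤ) : c * (c * S) = S := by linear_combination S * c2
  have bA := abs_sum_quadraticChar_cubic_le hF hq 0 1 (-1)
  have bT := abs_sum_quadraticChar_cubic_le hF hq 0 1 i
  have bU := abs_sum_quadraticChar_cubic_le hF hq 1 (-1) i
  have bC := abs_sum_quadraticChar_quintic_le hF hq 0 1 (-1) i (-i)
  simp only [sub_zero, sub_neg_eq_add] at bA bT bU bC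
  change 30 * |∑ x, a x * b x * d x| ≤ _ at bA
  change 30 * |∑ x, a x * b x * e x| ≤ _ at bT
  change 30 * |∑ x, b x * d x * e x| ≤ _ at bU
  change 24 * |∑ x, a x * b x * d x * e x * h x| ≤ _ at bC
  have saeh : ∑ x, a x * e x * h x = c * ∑ x, a x * b x * d x :=
    rot3 ra re rh fun x => by ring
  have sade : ∑ x, a x * d x * e x = c * ∑ x, a x * b x * e x :=
    rot3 ra rd re fun x => by ring
  have sadh : ∑ x, a x * d x * h x = c * ∑ x, a x * d x * e x :=
    rot3 ra rd rh fun x => by ring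
  have sabh : ∑ x, a x * b x * h x = c * ∑ x, a x * d x * h x :=
    rot3 ra rb rh fun x => by ring
  have sdeh : ∑ x, d x * e x * h x = c * ∑ x, b x * d x * e x :=
    rot3 rd re rh fun x => by ring
  have sbdh : ∑ x, b x * d x * h x = c * ∑ x, d x * e x * h x :=
    rot3 rb rd rh fun x => by ring
  have sbeh : ∑ x, b x * e x * h x = c * ∑ x, b x * d x * h x :=
    rot3 rb re rh fun x => by ring
  rw [sade, c2'] at sadh
  rw [sadh] at sabh
  rw [sdeh, c2'] at sbdh
  rw [sbdh] at sbeh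
  -- quartic terms
  have sbdeh : ∑ x, b x * d x * e x * h x = ∑ x, a x * b x * d x - 1 :=
    sum_quadraticChar_pow_four_sub_one hF hi
  have sabde : ∑ x, a x * b x * d x * e x = c * ∑ x, b x * d x * h x - 1 :=
    sum_quadraticChar_inv hneg hi
  have sadeh : ∑ x, a x * d x * e x * h x = ∑ x, a x * b x * d x * e x :=
    rot4 ra rd re rh fun x => by ring
  have sabdh : ∑ x, a x * b x * d x * h x = ∑ x, a x * d x * e x * h x :=
    rot4 ra rb rd rh fun x => by ring
  have sabeh : ∑ x, a x * b x * e x * h x = ∑ x, a x * b x * d x * h x :=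
    rot4 ra rb re rh fun x => by ring
  rw [sbdh] at sabde
  rw [sabde] at sadeh
  rw [sadeh] at sabdh
  rw [sabdh] at sabeh
  change 160 < ∑ x, (1 - a x) * (1 - b x) * (1 - d x) * (1 - e x) * (1 - h x)
  clear_value a b d e h c
  have expand : ∑ x, (1 - a x) * (1 - b x) * (1 - d x) * (1 - e x) * (1 - h x) =
      Fintype.card F - ∑ x, a x - ∑ x, b x - ∑ x, d x - ∑ x, e x - ∑ x, h x +
      ∑ x, a x * b x + ∑ x, a x * d x + ∑ x, a x * e x + ∑ x, a x * h x + ∑ x, b x * d x +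
      ∑ x, b x * e x + ∑ x, b x * h x + ∑ x, d x * e x + ∑ x, d x * h x + ∑ x, e x * h x -
      ∑ x, a x * b x * d x - ∑ x, a x * b x * e x - ∑ x, a x * b x * h x -
      ∑ x, a x * d x * e x - ∑ x, a x * d x * h x - ∑ x, a x * e x * h x -
      ∑ x, b x * d x * e x - ∑ x, b x * d x * h x - ∑ x, b x * e x * h x -
      ∑ x, d x * e x * h x +
      ∑ x, a x * b x * d x * e x + ∑ x, a x * b x * d x * h x + ∑ x, a x * b x * e x * h x +
      ∑ x, a x * d x * e x * h x + ∑ x, b x * d x * e x * h x -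
      ∑ x, a x * b x * d x * e x * h x := by
    rw [← Finset.card_univ, ← mul_one ((Finset.univ : Finset F).card : ℤ), ← nsmul_eq_mul,
      ← Finset.sum_const]
    simp only [← Finset.sum_add_distrib, ← Finset.sum_sub_distrib]
    exact Finset.sum_congr rfl fun x _ => by ring
  rw [expand, sa, sb, sd, se, sh, sab, sad, sae, sah, sbd, sbe, sbh, sde, sdh, seh, saeh, sade, sadh,
    sabh, sdeh, sbdh, sbeh, sbdeh, sabde, sadeh, sabdh, sabeh]
  generalize ∑ x, a x * b x * d x = A at *
  generalize ∑ x, a x * b x * e x = T at *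
  generalize ∑ x, b x * d x * e x = U at *
  generalize ∑ x, a x * b x * d x * e x * h x = V at *
  have hA := abs_le.mp (le_refl |A|)
  have hT := abs_le.mp (le_refl |T|)
  have hU := abs_le.mp (le_refl |U|)
  have hV := abs_le.mp (le_refl |V|)
  have hq' : (2810 : ℤ) ≤ Fintype.card F := by exact_mod_cast hq
  rcases hcc with rfl | rfl <;> linarith

end FivePotents

/-- If `q ≡ 1 (mod 4)` is a prime power with `q > 2809` and `n - 1 = (q-1)/2`, then not every
element of the finite field with `q` elements is the sum of a `5`-potent and an
`n`-potent. -/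
theorem not_sum_of_five_potent_and_n_potent_d_eq_two
    (q n : ℕ) (hq : IsPrimePow q) (hq4 : q % 4 = 1) (hq' : 2809 < q)
    (hn : n = (q - 1) / 2 + 1)
    (F : Type*) [Field F] [Fintype F] (hF : Fintype.card F = q) :
    ¬ (∀ γ : F, ∃ a b : F, a ^ 5 = a ∧ b ^ n = b ∧ a + b = γ) := by
  classical
  intro H
  subst hF
  have hchar : ringChar F ≠ 2 := fun h => by
    have := FiniteField.even_card_of_char_two h
    omega
  obtain ⟨i, hi⟩ : IsSquare (-1 : F) := FiniteField.isSquare_neg_one_iff.mpr (by omega)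
  have hneg : quadraticChar F (-1) = 1 :=
    (quadraticChar_one_iff_isSquare (neg_ne_zero.mpr one_ne_zero)).mpr ⟨i, hi⟩
  refine (lt_sum_prod_one_sub_quadraticChar hchar hq' hneg hi.symm).not_ge ?_
  have hpt (x : F) : (1 - quadraticChar F x) * (1 - quadraticChar F (x - 1)) *
      (1 - quadraticChar F (x + 1)) * (1 - quadraticChar F (x - i)) *
      (1 - quadraticChar F (x + i)) ≤
      32 * ((if x = 0 then 1 else 0) + (if x = 1 then 1 else 0) + (if x = -1 then 1 else 0) +
        (if x = i then 1 else 0) + (if x = -i then 1 else 0)) := by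
    have hle := prod_one_sub_le (abs_quadraticChar_le_one x) (abs_quadraticChar_le_one (x - 1))
      (abs_quadraticChar_le_one (x + 1)) (abs_quadraticChar_le_one (x - i))
      (abs_quadraticChar_le_one (x + i))
    obtain ⟨a, b, ha, hb, rfl⟩ := H x
    have hchi : b = 0 ∨ quadraticChar F b = 1 := by
      rcases eq_or_ne b 0 with h0 | h0
      · exact Or.inl h0
      · right
        rw [quadraticChar_eq_pow_of_char_ne_two hchar h0, if_pos]
        rw [hn, pow_succ, show (Fintype.card F - 1) / 2 = Fintype.card F / 2 by omega] at hb
        exact mul_right_cancel₀ h0 (hb.trans (one_mul b).symm)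
    have ha' : a = 0 ∨ a = 1 ∨ a = -1 ∨ a = i ∨ a = -i := by
      have : a * ((a - 1) * ((a + 1) * ((a - i) * (a + i)))) = 0 := by
        linear_combination ha + (a ^ 3 - a) * hi
      simpa only [mul_eq_zero, sub_eq_zero, add_eq_zero_iff_eq_neg] using this
    rcases hchi with rfl | hchi
    · refine hle.trans ?_
      rw [add_zero]
      have h01 (p : Prop) [Decidable p] : (0 : ℤ) ≤ if p then 1 else 0 := by
        split_ifs <;> norm_num
      have h0 := h01 (a = 0)
      have h1 := h01 (a = 1)
      have h2 := h01 (a = -1)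
      have h3 := h01 (a = i)
      have h4 := h01 (a = -i)
      rcases ha' with h | h | h | h | h
      · rw [if_pos h]; linarith
      · rw [if_pos h]; linarith
      · rw [if_pos h]; linarith
      · rw [if_pos h]; linarith
      · rw [if_pos h]; linarith
    · refine le_of_eq_of_le (b := 0) ?_ (by positivity)
      rcases ha' with rfl | rfl | rfl | rfl | rfl
      · rw [zero_add, hchi]; ring
      · rw [add_sub_cancel_left, hchi]; ring
      · rw [show -1 + b + 1 = b by ring, hchi]; ring
      · rw [add_sub_cancel_left, hchi]; ring
      · rw [show -i + b + i = b by ring, hchi]; ring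
  refine (Finset.sum_le_sum fun x _ => hpt x).trans ?_
  rw [← Finset.mul_sum]
  simp only [Finset.sum_add_distrib, Finset.sum_ite_eq', Finset.mem_univ, if_true]
  norm_num
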